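/- There exists a constant C ≤ 2⁹ such that for all m, k ∈ ℕ and d ≥ 2, the inverse of the minimal k-dispersion N(2^{−m}, d) := min{ N ∈ ℕ : k-disp*(N,d) ≤ 2^{−m} } satisfies N(2^{−m}, d) ≤ C · m · 2^m · max{ 2^m · log(2^m d) , k }. -/

import Mathlib

open MeasureTheory Finset
open scoped Classical

noncomputable section

/-- The `k`-dispersion of a finite point set `P ⊆ [0,1]^d`: the supremum of the volumes of
axis-parallel boxes inside `[0,1]^d` containing at most `k` points of `P`. -/
def kdisp (d k : ℕ) (P : Finset (Fin d → ℝ)) : ℝ :=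
  sSup { v : ℝ | ∃ a b : Fin d → ℝ,
    (∀ i, 0 ≤ a i ∧ a i ≤ b i ∧ b i ≤ 1) ∧
    (P.filter (fun x => ∀ i, x i ∈ Set.Ioo (a i) (b i))).card ≤ k ∧
    v = ∏ i, (b i - a i) }

/-- The minimal `k`-dispersion over all `n`-point subsets of `[0,1]^d`. -/
def kdispStar (d k n : ℕ) : ℝ :=
  sInf { v : ℝ | ∃ P : Finset (Fin d → ℝ),
    (∀ x ∈ P, ∀ i, x i ∈ Set.Icc (0:ℝ) 1) ∧ P.card = n ∧ v = kdisp d k P }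

/-!
Cut `[0,1]^d` into the cells of a grid of mesh `1/L`. The grid cells lying inside a box of volume
more than `4/L` make up at least a fraction `2/L` of all inner cells, since rounding each side
inwards costs little by the convexity inequality `prod_add_mul_le`. This set of cells depends only
on the sides of length at most `1 - 1/L`, of which there are at most `L * log (L/4)`, and only on
their endpoints rounded to the grid. Hence there are few such sets, and `N` random cells meet each
of them more than `k` times, by the exponential moment method and a union bound.
-/

section RandomTuples

variable {ι G : Type*} [Fintype ι] [Fintype G] [DecidableEq G]

lemma sum_half_pow_card_hits [DecidableEq ι] (Q : Finset G) :
    ∑ f : ι → G, (1 / 2 : ℝ) ^ #{j | f j ∈ Q} =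
      (Fintype.card G - #Q / 2 : ℝ) ^ Fintype.card ι := by
  have sum_weight : ∑ g : G, (if g ∈ Q then 1 / 2 else 1 : ℝ) = Fintype.card G - #Q / 2 := by
    have weight_eq (g : G) :
        (if g ∈ Q then 1 / 2 else 1 : ℝ) = 1 - if g ∈ Q then 1 / 2 else 0 := by
      split_ifs <;> norm_num
    simp only [weight_eq, sum_sub_distrib, sum_const, card_univ, nsmul_eq_mul, mul_one,
      sum_ite_mem, univ_inter, mul_one_div]
  calc ∑ f : ι → G, (1 / 2 : ℝ) ^ #{j | f j ∈ Q}
      = ∑ f : ι → G, ∏ j, (if f j ∈ Q then 1 / 2 else 1 : ℝ) := by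
        simp only [prod_ite, prod_const, one_pow, mul_one]
    _ = ∏ _j : ι, ∑ g : G, (if g ∈ Q then 1 / 2 else 1 : ℝ) :=
        (Fintype.prod_sum fun _ g => if g ∈ Q then 1 / 2 else 1).symm
    _ = _ := by rw [sum_weight, prod_const, card_univ]

lemma sum_half_pow_card_hits_le [DecidableEq ι] {Q : Finset G} {q : ℝ}
    (hQ : q * Fintype.card G ≤ #Q) :
    ∑ f : ι → G, (1 / 2 : ℝ) ^ #{j | f j ∈ Q} ≤
      (Fintype.card G : ℝ) ^ Fintype.card ι * Real.exp (-(Fintype.card ι * (q / 2))) := by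
  have hQ_card : (#Q : ℝ) ≤ Fintype.card G := mod_cast card_le_univ Q
  have one_sub_le : 1 - q / 2 ≤ Real.exp (-(q / 2)) := Real.one_sub_le_exp_neg _
  calc ∑ f : ι → G, (1 / 2 : ℝ) ^ #{j | f j ∈ Q}
      = (Fintype.card G - #Q / 2 : ℝ) ^ Fintype.card ι := sum_half_pow_card_hits Q
    _ ≤ (Fintype.card G * Real.exp (-(q / 2))) ^ Fintype.card ι := by
        gcongr
        · linarith [(#Q).cast_nonneg (α := ℝ)]
        · nlinarith [(Fintype.card G).cast_nonneg (α := ℝ)]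
    _ = _ := by rw [mul_pow, ← Real.exp_nat_mul, mul_neg]

lemma exists_forall_lt_card_hits [Nonempty G] {T : Finset (Finset G)} {k : ℕ} {q : ℝ}
    (hdense : ∀ Q ∈ T, q * Fintype.card G ≤ #Q)
    (hT : #T * 2 ^ k * Real.exp (-(Fintype.card ι * (q / 2))) < 1) :
    ∃ f : ι → G, ∀ Q ∈ T, k < #{j | f j ∈ Q} := by
  have sum_lt : ∑ f : ι → G, ∑ Q ∈ T, (2 : ℝ) ^ k * (1 / 2) ^ #{j | f j ∈ Q} <
      ∑ _f : ι → G, (1 : ℝ) := by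
    rw [sum_comm]
    calc ∑ Q ∈ T, ∑ f : ι → G, (2 : ℝ) ^ k * (1 / 2) ^ #{j | f j ∈ Q}
        ≤ ∑ _Q ∈ T, 2 ^ k * ((Fintype.card G : ℝ) ^ Fintype.card ι *
            Real.exp (-(Fintype.card ι * (q / 2)))) := by
          gcongr with Q hQ
          rw [← mul_sum]
          gcongr
          exact sum_half_pow_card_hits_le (hdense Q hQ)
      _ = (Fintype.card G : ℝ) ^ Fintype.card ι *
            (#T * 2 ^ k * Real.exp (-(Fintype.card ι * (q / 2)))) := by
          rw [sum_const, nsmul_eq_mul]; ring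
      _ < (Fintype.card G : ℝ) ^ Fintype.card ι := mul_lt_of_lt_one_right (by positivity) hT
      _ = ∑ _f : ι → G, (1 : ℝ) := by simp
  obtain ⟨f, -, hf⟩ := exists_lt_of_sum_lt sum_lt
  refine ⟨f, fun Q hQ => lt_of_not_ge fun hits_le => hf.not_ge ?_⟩
  calc (1 : ℝ) = 2 ^ k * (1 / 2) ^ k := by rw [← mul_pow]; norm_num
    _ ≤ 2 ^ k * (1 / 2) ^ #{j | f j ∈ Q} := by
        gcongr 2 ^ k * ?_
        exact pow_le_pow_of_le_one (by norm_num) (by norm_num) hits_le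
    _ ≤ ∑ Q ∈ T, 2 ^ k * (1 / 2) ^ #{j | f j ∈ Q} :=
        single_le_sum (f := fun Q => (2 : ℝ) ^ k * (1 / 2) ^ #{j | f j ∈ Q})
          (fun _ _ => by positivity) hQ

end RandomTuples

section Products

variable {ι : Type*}

lemma prod_add_mul_le (s : Finset ι) {t : ι → ℝ} {w : ℝ} (hw₀ : 0 ≤ w) (hw₁ : w ≤ 1)
    (ht : ∀ i ∈ s, 0 ≤ t i ∧ t i ≤ 1) :
    ∏ i ∈ s, (w + (1 - w) * t i) ≤ w + (1 - w) * ∏ i ∈ s, t i := by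
  induction s using Finset.induction_on with
  | empty => simp
  | insert i s hi ih =>
    obtain ⟨⟨hti₀, hti₁⟩, hts⟩ := forall_mem_insert .. |>.1 ht
    have prod_le_one : ∏ j ∈ s, t j ≤ 1 :=
      Finset.prod_le_one (fun j hj => (hts j hj).1) fun j hj => (hts j hj).2
    have w_compl_nonneg : 0 ≤ 1 - w := sub_nonneg.2 hw₁
    rw [prod_insert hi, prod_insert hi]
    calc (w + (1 - w) * t i) * ∏ j ∈ s, (w + (1 - w) * t j)
        ≤ (w + (1 - w) * t i) * (w + (1 - w) * ∏ j ∈ s, t j) := by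
          gcongr
          exact ih hts
      _ = w + (1 - w) * (t i * ∏ j ∈ s, t j) -
            w * (1 - w) * ((1 - t i) * (1 - ∏ j ∈ s, t j)) := by ring
      _ ≤ w + (1 - w) * (t i * ∏ j ∈ s, t j) :=
          sub_le_self _ <| mul_nonneg (mul_nonneg hw₀ w_compl_nonneg)
            (mul_nonneg (sub_nonneg.2 hti₁) (sub_nonneg.2 prod_le_one))

variable [Fintype ι] {l : ι → ℝ}

lemma prod_le_apply_of_le_one (hl : ∀ i, 0 ≤ l i ∧ l i ≤ 1) (i : ι) : ∏ j, l j ≤ l i := by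
  simpa only [prod_singleton] using prod_le_prod_of_subset_of_le_one (subset_univ {i})
    (fun j _ => (hl j).1) fun j _ _ => (hl j).2

lemma prod_le_exp_neg_mul_card (hl : ∀ i, 0 ≤ l i ∧ l i ≤ 1) (δ : ℝ) :
    ∏ i, l i ≤ Real.exp (-(δ * #{i | l i ≤ 1 - δ})) := by
  calc ∏ i, l i ≤ ∏ i with l i ≤ 1 - δ, l i :=
        prod_le_prod_of_subset_of_le_one (filter_subset _ _) (fun i _ => (hl i).1)
          fun i _ _ => (hl i).2
    _ ≤ ∏ i with l i ≤ 1 - δ, Real.exp (-δ) :=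
        prod_le_prod (fun i _ => (hl i).1) fun i hi =>
          (mem_filter.1 hi).2.trans (Real.one_sub_le_exp_neg δ)
    _ = Real.exp (-(δ * #{i | l i ≤ 1 - δ})) := by
        rw [prod_const, ← Real.exp_nat_mul, mul_neg, mul_comm]

end Products

lemma card_short_sides_le {ι : Type*} [Fintype ι] {n : ℕ} {a b : ι → ℝ}
    (hab : ∀ i, 0 ≤ a i ∧ a i ≤ b i ∧ b i ≤ 1)
    (hvol : (4 / (n + 2) : ℝ) < ∏ i, (b i - a i)) :
    #{i | b i - a i ≤ 1 - 1 / (n + 2 : ℝ)} ≤ (n + 2) * Real.log ((n + 2) / 4) := by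
  have exp_bound : 4 / (n + 2) <
      Real.exp (-(1 / (n + 2) * #{i | b i - a i ≤ 1 - 1 / (n + 2 : ℝ)})) :=
    hvol.trans_le <| prod_le_exp_neg_mul_card
      (fun i => by constructor <;> linarith [hab i]) _
  rw [← Real.log_lt_iff_lt_exp (by positivity), ← inv_div, Real.log_inv, neg_lt_neg_iff,
    one_div_mul_eq_div, div_lt_iff₀' (by positivity)] at exp_bound
  exact exp_bound.le

lemma exists_fin_range_superset {ι : Type*} [Nonempty ι] {S : Finset ι} {A : ℕ} (hS : #S ≤ A) :
    ∃ φ : Fin A → ι, ↑S ⊆ Set.range φ := by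
  obtain ⟨e⟩ : Nonempty (S ↪ Fin A) :=
    Function.Embedding.nonempty_of_card_le (by simpa using hS)
  refine ⟨Function.extend e Subtype.val fun _ => Classical.arbitrary ι, fun i hi => ⟨e ⟨i, hi⟩, ?_⟩⟩
  exact e.injective.extend_apply ..

lemma lt_add_one_and_add_two_lt_iff {x : ℝ} (hx : 0 ≤ x) (y : ℝ) (g : ℕ) :
    (x < g + 1 ∧ (g + 2 : ℝ) < y) ↔ ⌊x⌋₊ ≤ g ∧ g + 2 < ⌈y⌉₊ := by
  rw [← Nat.lt_add_one_iff, Nat.floor_lt hx, Nat.lt_ceil]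
  push_cast
  rfl

lemma sub_sub_two_le_card_cells {n : ℕ} {x y : ℝ} (hx : 0 ≤ x) (hy : y ≤ n + 2) :
    y - x - 2 ≤ #{g : Fin n | x < g + 1 ∧ (g + 2 : ℝ) < y} := by
  have ceil_le : ⌈y⌉₊ ≤ n + 2 := Nat.ceil_le.2 (mod_cast hy)
  set cells : Finset (Fin n) := {g | x < g + 1 ∧ (g + 2 : ℝ) < y} with hcells
  have card_ge : ⌈y⌉₊ - 2 - ⌊x⌋₊ ≤ #cells := by
    rw [← Nat.card_Ico, ← card_attachFin (n := n) (Ico ⌊x⌋₊ (⌈y⌉₊ - 2))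
      (fun g hg => by rw [mem_Ico] at hg; omega)]
    refine card_le_card fun g hg => ?_
    rw [mem_attachFin, mem_Ico] at hg
    rw [hcells, mem_filter_univ, lt_add_one_and_add_two_lt_iff hx]
    omega
  have ceil_le_card_add : (⌈y⌉₊ : ℝ) ≤ #cells + 2 + ⌊x⌋₊ := by
    exact_mod_cast (by omega : ⌈y⌉₊ ≤ #cells + 2 + ⌊x⌋₊)
  linarith [Nat.floor_le hx, Nat.le_ceil y]

section GridCells

variable {ι : Type*} [Fintype ι] [DecidableEq ι] {n : ℕ} {a b : ι → ℝ}

/-- The cells, in the grid of mesh `1 / (n + 2)`, that are contained in the open box with corners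
`a` and `b`. The index `g : ι → Fin n` stands for the cell
`∏ i, [(g i + 1) / (n + 2), (g i + 2) / (n + 2)]`, so that the cells touching the boundary of the
unit cube are left out. -/
def innerCells (n : ℕ) (a b : ι → ℝ) : Finset (ι → Fin n) :=
  {g | ∀ i, a i * (n + 2) < g i + 1 ∧ (g i + 2 : ℝ) < b i * (n + 2)}

lemma prod_le_card_innerCells (hab : ∀ i, 0 ≤ a i ∧ 2 ≤ (b i - a i) * (n + 2) ∧ b i ≤ 1) :
    ∏ i, ((b i - a i) * (n + 2) - 2) ≤ #(innerCells n a b) := by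
  have innerCells_eq : innerCells n a b = Fintype.piFinset fun i =>
      {g : Fin n | a i * (n + 2) < g + 1 ∧ (g + 2 : ℝ) < b i * (n + 2)} := by
    ext g
    simp only [innerCells, mem_filter_univ, Fintype.mem_piFinset]
  rw [innerCells_eq, Fintype.card_piFinset, Nat.cast_prod]
  refine prod_le_prod (fun i _ => by linarith [hab i]) fun i _ => ?_
  rw [sub_mul]
  exact sub_sub_two_le_card_cells (mul_nonneg (hab i).1 (by positivity))
    (mul_le_of_le_one_left (by positivity) (hab i).2.2)

lemma two_div_mul_card_le_card_innerCells (hn : 0 < n)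
    (hab : ∀ i, 0 ≤ a i ∧ a i ≤ b i ∧ b i ≤ 1) (hvol : (4 / (n + 2) : ℝ) ≤ ∏ i, (b i - a i)) :
    2 / (n + 2) * (Fintype.card (ι → Fin n) : ℝ) ≤ #(innerCells n a b) := by
  have hn₀ : (0 : ℝ) < n := mod_cast hn
  have side_le_one : ∀ i, 0 ≤ b i - a i ∧ b i - a i ≤ 1 := fun i => by
    constructor <;> linarith [hab i]
  have side_ge (i : ι) : 4 ≤ (b i - a i) * (n + 2) :=
    (div_le_iff₀ (by positivity)).1 <| hvol.trans (prod_le_apply_of_le_one side_le_one i)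
  -- `t i` is the relative length of the `i`-th side after rounding inwards.
  set t : ι → ℝ := fun i => ((b i - a i) * (n + 2) - 2) / n with ht_def
  have ht : ∀ i, 0 ≤ t i ∧ t i ≤ 1 := fun i =>
    ⟨div_nonneg (by linarith [side_ge i]) hn₀.le,
      (div_le_one hn₀).2 (by nlinarith [side_le_one i])⟩
  have side_eq (i : ι) : b i - a i = 2 / (n + 2) + (1 - 2 / (n + 2)) * t i := by
    rw [ht_def]; field_simp; ring
  have two_div_le_prod : 2 / (n + 2) ≤ ∏ i, t i := by
    have convexity : ∏ i, (b i - a i) ≤ 2 / (n + 2) + (1 - 2 / (n + 2)) * ∏ i, t i := by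
      simp only [side_eq]
      exact prod_add_mul_le univ (by positivity) ((div_le_one (by positivity)).2 (by linarith))
        fun i _ => ht i
    have prod_nonneg : 0 ≤ 2 / (n + 2) * ∏ i, t i :=
      mul_nonneg (by positivity) (Finset.prod_nonneg fun i _ => (ht i).1)
    have four_div : (4 / (n + 2) : ℝ) = 2 / (n + 2) + 2 / (n + 2) := by ring
    linarith
  calc 2 / (n + 2) * (Fintype.card (ι → Fin n) : ℝ)
      ≤ (∏ i, t i) * (Fintype.card (ι → Fin n) : ℝ) := by gcongr
    _ = ∏ i, ((b i - a i) * (n + 2) - 2) := by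
        rw [ht_def, prod_div_distrib, prod_const, card_univ, Fintype.card_fun, Fintype.card_fin,
          Nat.cast_pow, div_mul_cancel₀ _ (by positivity)]
    _ ≤ #(innerCells n a b) := prod_le_card_innerCells fun i =>
        ⟨(hab i).1, by linarith [side_ge i], (hab i).2.2⟩

/-- The cells satisfying a list `t` of constraints, where `(i, α, β)` demands `α ≤ g i` and
`g i + 2 < β` of the cell `g`. This is the encoding by which the sets `innerCells n a b` are
counted. -/
def constrainedCells {A : ℕ} (t : Fin A → ι × Fin (n + 3) × Fin (n + 3)) : Finset (ι → Fin n) :=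
  {g | ∀ s, ((t s).2.1 : ℕ) ≤ g (t s).1 ∧ (g (t s).1 : ℕ) + 2 < (t s).2.2}

/-- The length threshold is `1 - 1 / (n + 2)` because a longer side constrains no cell. -/
lemma exists_constrainedCells_eq_innerCells [Nonempty ι] {A : ℕ}
    (hab : ∀ i, 0 ≤ a i ∧ a i ≤ b i ∧ b i ≤ 1)
    (hA : #{i | b i - a i ≤ 1 - 1 / (n + 2 : ℝ)} ≤ A) :
    ∃ t : Fin A → ι × Fin (n + 3) × Fin (n + 3), constrainedCells t = innerCells n a b := by
  have scaled_bounds (i : ι) : 0 ≤ a i * (n + 2) ∧ a i * (n + 2) ≤ b i * (n + 2) ∧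
      b i * (n + 2) ≤ n + 2 :=
    ⟨mul_nonneg (hab i).1 (by positivity), by gcongr; exact (hab i).2.1,
      mul_le_of_le_one_left (by positivity) (hab i).2.2⟩
  have floor_lt (i : ι) : ⌊a i * (n + 2)⌋₊ < n + 3 := by
    rw [Nat.floor_lt (scaled_bounds i).1]
    push_cast
    linarith [scaled_bounds i]
  have ceil_lt (i : ι) : ⌈b i * (n + 2)⌉₊ < n + 3 := by
    rw [Nat.lt_add_one_iff, Nat.ceil_le]
    exact_mod_cast (scaled_bounds i).2.2
  have unconstrained (i : ι) (hi : 1 - 1 / (n + 2 : ℝ) < b i - a i) (g : Fin n) :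
      a i * (n + 2) < g + 1 ∧ (g + 2 : ℝ) < b i * (n + 2) := by
    have g_lt : (g : ℝ) + 1 ≤ n := mod_cast g.isLt
    have side_gt : (n + 1 : ℝ) < (b i - a i) * (n + 2) := by
      calc (n + 1 : ℝ) = (1 - 1 / (n + 2)) * (n + 2) := by field_simp; ring
        _ < (b i - a i) * (n + 2) := by gcongr
    rw [sub_mul] at side_gt
    constructor <;> linarith [scaled_bounds i, (g : ℕ).cast_nonneg (α := ℝ)]
  obtain ⟨φ, hφ⟩ := exists_fin_range_superset hA
  refine ⟨fun s => (φ s, ⟨_, floor_lt (φ s)⟩, ⟨_, ceil_lt (φ s)⟩), ?_⟩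
  ext g
  simp only [constrainedCells, innerCells, mem_filter_univ,
    ← lt_add_one_and_add_two_lt_iff (scaled_bounds _).1]
  refine ⟨fun hg i => ?_, fun hg s => hg (φ s)⟩
  by_cases hi : b i - a i ≤ 1 - 1 / (n + 2 : ℝ)
  · obtain ⟨s, rfl⟩ := hφ (mem_coe.2 (mem_filter_univ i |>.2 hi))
    exact hg s
  · exact unconstrained i (not_le.1 hi) (g i)

variable (ι n) in
/-- The test family: the sets `innerCells n a b` of all boxes of volume more than `4 / (n + 2)` in
the unit cube. Distinct points chosen from a list of cells have `k`-dispersion at most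
`4 / (n + 2)` once more than `k` entries of the list lie in each member of this family. -/
def largeBoxCells : Finset (Finset (ι → Fin n)) :=
  {Q | ∃ a b : ι → ℝ, (∀ i, 0 ≤ a i ∧ a i ≤ b i ∧ b i ≤ 1) ∧
    (4 / (n + 2) : ℝ) < ∏ i, (b i - a i) ∧ innerCells n a b = Q}

lemma card_largeBoxCells_le [Nonempty ι] (hn : 2 ≤ n) :
    (#(largeBoxCells ι n) : ℝ) ≤ Real.exp
      ((n + 2) * Real.log ((n + 2) / 4) * Real.log (Fintype.card ι * (n + 3) ^ 2)) := by
  have hn' : (2 : ℝ) ≤ n := mod_cast hn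
  set A : ℕ := ⌊(n + 2) * Real.log ((n + 2) / 4)⌋₊
  have hA_le : (A : ℝ) ≤ (n + 2) * Real.log ((n + 2) / 4) :=
    Nat.floor_le <| mul_nonneg (by positivity) (Real.log_nonneg (by linarith))
  have subset_image : largeBoxCells ι n ⊆
      univ.image (constrainedCells : (Fin A → ι × Fin (n + 3) × Fin (n + 3)) → _) := by
    intro Q hQ
    obtain ⟨a, b, hab, hvol, rfl⟩ := (mem_filter_univ Q).1 hQ
    obtain ⟨t, ht⟩ :=
      exists_constrainedCells_eq_innerCells hab (Nat.le_floor (card_short_sides_le hab hvol))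
    exact mem_image.2 ⟨t, mem_univ t, ht⟩
  have card_le : #(largeBoxCells ι n) ≤ (Fintype.card ι * (n + 3) ^ 2) ^ A := by
    refine (card_le_card subset_image).trans (card_image_le.trans_eq ?_)
    simp [sq]
  have one_le_card : (1 : ℝ) ≤ Fintype.card ι := mod_cast Fintype.card_pos
  have one_le_base : 1 ≤ Fintype.card ι * (n + 3 : ℝ) ^ 2 :=
    one_le_mul_of_one_le_of_one_le one_le_card (one_le_pow₀ (by linarith))
  calc (#(largeBoxCells ι n) : ℝ) ≤ (Fintype.card ι * (n + 3 : ℝ) ^ 2) ^ A := mod_cast card_le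
    _ = Real.exp (A * Real.log (Fintype.card ι * (n + 3) ^ 2)) := by
        rw [Real.exp_nat_mul, Real.exp_log (by positivity)]
    _ ≤ _ := by
        gcongr
        exact Real.log_nonneg one_le_base

end GridCells

section Jitter

variable {ι : Type*} {n N : ℕ}

/-- A point in each of the cells `f j`, in the indexing of `innerCells`. The offset `j / N` inside
the cell keeps the points distinct even where `f` repeats a cell. -/
def jitteredPoint (f : Fin N → ι → Fin n) (j : Fin N) (i : ι) : ℝ :=
  (f j i + 1 + (j : ℝ) / N) / (n + 2)

lemma fin_div_mem_Ico (j : Fin N) : (j : ℝ) / N ∈ Set.Ico (0 : ℝ) 1 :=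
  ⟨by positivity, (div_lt_one (mod_cast j.pos)).2 (mod_cast j.isLt)⟩

lemma jitteredPoint_mem_Ico (f : Fin N → ι → Fin n) (j : Fin N) (i : ι) :
    jitteredPoint f j i ∈ Set.Ico ((f j i + 1 : ℝ) / (n + 2)) ((f j i + 2 : ℝ) / (n + 2)) := by
  obtain ⟨offset_nonneg, offset_lt⟩ := fin_div_mem_Ico j
  exact ⟨div_le_div_of_nonneg_right (by linarith) (by positivity),
    div_lt_div_of_pos_right (by linarith) (by positivity)⟩

lemma jitteredPoint_mem_Icc (f : Fin N → ι → Fin n) (j : Fin N) (i : ι) :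
    jitteredPoint f j i ∈ Set.Icc (0 : ℝ) 1 := by
  obtain ⟨cell_le, lt_cell⟩ := jitteredPoint_mem_Ico f j i
  have cell_lt : (f j i : ℝ) ≤ n := mod_cast (f j i).isLt.le
  exact ⟨le_trans (by positivity) cell_le,
    lt_cell.le.trans <| (div_le_one (by positivity)).2 (by linarith)⟩

lemma jitteredPoint_injective [Nonempty ι] (f : Fin N → ι → Fin n) :
    Function.Injective (jitteredPoint f) := by
  have fract_eq (j : Fin N) (i : ι) : Int.fract (jitteredPoint f j i * (n + 2)) = (j : ℝ) / N := by
    obtain ⟨offset_nonneg, offset_lt⟩ := fin_div_mem_Ico j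
    rw [jitteredPoint, div_mul_cancel₀ _ (by positivity), ← Nat.cast_add_one,
      Int.fract_natCast_add, Int.fract_eq_self.2 ⟨offset_nonneg, offset_lt⟩]
  intro j j' hjj'
  have offset_eq : (j : ℝ) / N = (j' : ℝ) / N := by
    rw [← fract_eq j (Classical.arbitrary ι), hjj', fract_eq]
  have hN : (N : ℝ) ≠ 0 := mod_cast j.pos.ne'
  exact Fin.ext (mod_cast (div_left_inj' hN).1 offset_eq)

lemma jitteredPoint_mem_Ioo [Fintype ι] [DecidableEq ι] {f : Fin N → ι → Fin n} {j : Fin N}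
    {a b : ι → ℝ} (hj : f j ∈ innerCells n a b) (i : ι) :
    jitteredPoint f j i ∈ Set.Ioo (a i) (b i) := by
  obtain ⟨cell_le, lt_cell⟩ := jitteredPoint_mem_Ico f j i
  obtain ⟨lower_lt, lt_upper⟩ := (mem_filter_univ (f j)).1 hj i
  exact ⟨((lt_div_iff₀ (by positivity)).2 lower_lt).trans_le cell_le,
    lt_cell.trans ((div_lt_iff₀ (by positivity)).2 lt_upper)⟩

end Jitter

section Dispersion

variable {d k : ℕ}

lemma kdisp_nonneg (P : Finset (Fin d → ℝ)) : 0 ≤ kdisp d k P := by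
  refine Real.sSup_nonneg ?_
  rintro _ ⟨a, b, hab, -, rfl⟩
  exact prod_nonneg fun i _ => sub_nonneg.2 (hab i).2.1

lemma kdisp_le {P : Finset (Fin d → ℝ)} {v : ℝ} (hv : 0 ≤ v)
    (h : ∀ a b : Fin d → ℝ, (∀ i, 0 ≤ a i ∧ a i ≤ b i ∧ b i ≤ 1) → v < ∏ i, (b i - a i) →
      k < #{x ∈ P | ∀ i, x i ∈ Set.Ioo (a i) (b i)}) :
    kdisp d k P ≤ v := by
  refine Real.sSup_le ?_ hv
  rintro _ ⟨a, b, hab, hcard, rfl⟩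
  exact le_of_not_gt fun hvol => (h a b hab hvol).not_ge hcard

lemma kdispStar_le_kdisp {P : Finset (Fin d → ℝ)} (hP : ∀ x ∈ P, ∀ i, x i ∈ Set.Icc (0 : ℝ) 1) :
    kdispStar d k #P ≤ kdisp d k P := by
  refine csInf_le ⟨0, ?_⟩ ⟨P, hP, rfl, rfl⟩
  rintro _ ⟨P', -, -, rfl⟩
  exact kdisp_nonneg P'

lemma kdispStar_le_of_forall_lt_card_hits [NeZero d] {n N : ℕ} (f : Fin N → Fin d → Fin n)
    (hf : ∀ Q ∈ largeBoxCells (Fin d) n, k < #{j | f j ∈ Q}) :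
    kdispStar d k N ≤ 4 / (n + 2) := by
  set P : Finset (Fin d → ℝ) := univ.map ⟨jitteredPoint f, jitteredPoint_injective f⟩ with hP
  have card_P : #P = N := by rw [hP, card_map, card_univ, Fintype.card_fin]
  have P_subset_cube : ∀ x ∈ P, ∀ i, x i ∈ Set.Icc (0 : ℝ) 1 := by
    simp only [hP, mem_map, mem_univ, true_and, forall_exists_index,
      forall_apply_eq_imp_iff, Function.Embedding.coeFn_mk]
    exact jitteredPoint_mem_Icc f
  refine (card_P ▸ kdispStar_le_kdisp P_subset_cube).trans (kdisp_le (by positivity) ?_)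
  intro a b hab hvol
  have hits : k < #{j | f j ∈ innerCells n a b} :=
    hf _ ((mem_filter_univ _).2 ⟨a, b, hab, hvol, rfl⟩)
  refine hits.trans_le ?_
  rw [hP, filter_map, card_map]
  exact card_le_card <| monotone_filter_right univ fun j _ hj => jitteredPoint_mem_Ioo hj

lemma kdispStar_le_four_div {n N : ℕ} (hd : 0 < d) (hn : 2 ≤ n)
    (hN : (n + 2) * (k + (n + 2) * Real.log ((n + 2) / 4) * Real.log (d * (n + 3) ^ 2)) <
      (N : ℝ)) :
    kdispStar d k N ≤ 4 / (n + 2) := by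
  have : NeZero d := ⟨hd.ne'⟩
  have : NeZero n := ⟨by omega⟩
  have two_pow_le : (2 : ℝ) ^ k ≤ Real.exp k := by
    rw [← Real.exp_one_pow]
    gcongr
    exact Real.exp_one_gt_two.le
  obtain ⟨f, hf⟩ : ∃ f : Fin N → Fin d → Fin n,
      ∀ Q ∈ largeBoxCells (Fin d) n, k < #{j | f j ∈ Q} := by
    refine exists_forall_lt_card_hits (q := 2 / (n + 2)) (fun Q hQ => ?_) ?_
    · obtain ⟨a, b, hab, hvol, rfl⟩ := (mem_filter_univ Q).1 hQ
      exact two_div_mul_card_le_card_innerCells (by omega) hab hvol.le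
    · have card_le := card_largeBoxCells_le (ι := Fin d) hn
      rw [Fintype.card_fin] at card_le ⊢
      calc #(largeBoxCells (Fin d) n) * 2 ^ k * Real.exp (-(N * (2 / (n + 2) / 2)))
          ≤ Real.exp ((n + 2) * Real.log ((n + 2) / 4) * Real.log (d * (n + 3) ^ 2)) *
              Real.exp k * Real.exp (-(N * (2 / (n + 2) / 2))) := by gcongr
        _ = Real.exp ((n + 2) * Real.log ((n + 2) / 4) * Real.log (d * (n + 3) ^ 2) + k -
              N / (n + 2)) := by
            rw [← Real.exp_add, ← Real.exp_add]; ring_nf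
        _ < 1 := by
            rw [← lt_div_iff₀' (by positivity)] at hN
            rw [Real.exp_lt_one_iff]
            linarith
  exact kdispStar_le_of_forall_lt_card_hits f hf

lemma log_mul_four_mul_add_one_sq_le {x y : ℝ} (hx : 2 ≤ x) (hy : 1 ≤ y) :
    Real.log (y * (4 * x + 1) ^ 2) ≤ 7 * Real.log (x * y) := by
  have four_mul_add_one_sq_le : (4 * x + 1) ^ 2 ≤ x ^ 7 :=
    calc (4 * x + 1) ^ 2 ≤ 2 ^ 5 * x ^ 2 := by nlinarith
      _ ≤ x ^ 5 * x ^ 2 := by gcongr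
      _ = x ^ 7 := by ring
  calc Real.log (y * (4 * x + 1) ^ 2) ≤ Real.log (y ^ 7 * x ^ 7) := by
        gcongr
        exact le_self_pow₀ hy (by norm_num)
    _ = Real.log ((x * y) ^ 7) := by rw [mul_pow, mul_comm]
    _ = 7 * Real.log (x * y) := by rw [Real.log_pow]; norm_num

lemma kdispStar_le_inv_two_pow {m N : ℕ} (hm : 1 ≤ m) (hd : 1 ≤ d)
    (hN : 116 * m * 2 ^ m * max ((2 : ℝ) ^ m * Real.log (2 ^ m * d)) k < N) :
    kdispStar d k N ≤ ((2 : ℝ) ^ m)⁻¹ := by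
  set M : ℝ := max ((2 : ℝ) ^ m * Real.log (2 ^ m * d)) k
  have hm' : (1 : ℝ) ≤ m := mod_cast hm
  have hd' : (1 : ℝ) ≤ d := mod_cast hd
  have two_le_two_pow : (2 : ℝ) ≤ 2 ^ m := le_self_pow₀ one_le_two (by omega)
  obtain ⟨n, hn⟩ : ∃ n, n + 2 = 4 * 2 ^ m := ⟨4 * 2 ^ m - 2, by have := m.one_le_two_pow; omega⟩
  have hn' : (n + 2 : ℝ) = 4 * 2 ^ m := mod_cast hn
  have log_two_pow_le : Real.log (2 ^ m) ≤ m := by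
    rw [Real.log_pow]
    exact mul_le_of_le_one_right m.cast_nonneg (Real.log_two_lt_d9.le.trans (by norm_num))
  have log_nonneg : 0 ≤ Real.log (2 ^ m * d) := Real.log_nonneg (by nlinarith)
  have threshold_le : (n + 2) * (k + (n + 2) * Real.log ((n + 2) / 4) *
      Real.log (d * (n + 3) ^ 2)) ≤ 116 * m * 2 ^ m * M := by
    rw [show (n + 3 : ℝ) = 4 * 2 ^ m + 1 by linarith, hn', mul_div_cancel_left₀ _ four_ne_zero]
    calc 4 * 2 ^ m * (k + 4 * 2 ^ m * Real.log (2 ^ m) * Real.log (d * (4 * 2 ^ m + 1) ^ 2))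
        ≤ 4 * 2 ^ m * (k + 4 * 2 ^ m * m * (7 * Real.log (2 ^ m * d))) := by
          gcongr
          · exact Real.log_nonneg (by nlinarith)
          · exact log_mul_four_mul_add_one_sq_le two_le_two_pow hd'
      _ = 4 * 2 ^ m * (k + 28 * m * (2 ^ m * Real.log (2 ^ m * d))) := by ring
      _ ≤ 4 * 2 ^ m * (m * M + 28 * m * M) := by
          gcongr
          · exact (le_max_right _ _).trans (le_mul_of_one_le_left (by positivity) hm')
          · exact le_max_left _ _
      _ = 116 * m * 2 ^ m * M := by ring
  have two_le_n : 2 ≤ n := by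
    have : 2 ≤ 2 ^ m := mod_cast two_le_two_pow
    omega
  calc kdispStar d k N ≤ 4 / (n + 2) :=
        kdispStar_le_four_div hd two_le_n (threshold_le.trans_lt hN)
    _ = ((2 : ℝ) ^ m)⁻¹ := by rw [hn', div_mul_cancel_left₀ four_ne_zero]

end Dispersion

theorem statement_9_general {m d : ℕ} (k : ℕ) (hm : 1 ≤ m) (hd : 1 ≤ d) :
    ((sInf {N : ℕ | kdispStar d k N ≤ ((2 : ℝ) ^ m)⁻¹} : ℕ) : ℝ) ≤
      2 ^ 7 * m * 2 ^ m * max ((2 : ℝ) ^ m * Real.log (2 ^ m * d)) k := by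
  set M : ℝ := max ((2 : ℝ) ^ m * Real.log (2 ^ m * d)) k
  have hm' : (1 : ℝ) ≤ m := mod_cast hm
  have hd' : (1 : ℝ) ≤ d := mod_cast hd
  have two_le_two_pow : (2 : ℝ) ≤ 2 ^ m := le_self_pow₀ one_le_two (by omega)
  have one_le_M : 1 ≤ M :=
    calc (1 : ℝ) ≤ 2 * Real.log 2 := by linarith [Real.log_two_gt_d9]
      _ ≤ 2 ^ m * Real.log (2 ^ m * d) := by gcongr; nlinarith
      _ ≤ M := le_max_left _ _
  have one_le_product : 1 ≤ m * 2 ^ m * M :=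
    one_le_mul_of_one_le_of_one_le
      (one_le_mul_of_one_le_of_one_le hm' (one_le_two.trans two_le_two_pow)) one_le_M
  have lt_floor : 2 ^ 7 * m * 2 ^ m * M < ⌊2 ^ 7 * m * 2 ^ m * M⌋₊ + 1 := Nat.lt_floor_add_one _
  have floor_mem : ⌊2 ^ 7 * m * 2 ^ m * M⌋₊ ∈ {N : ℕ | kdispStar d k N ≤ ((2 : ℝ) ^ m)⁻¹} :=
    kdispStar_le_inv_two_pow hm hd (by linarith)
  calc ((sInf {N : ℕ | kdispStar d k N ≤ ((2 : ℝ) ^ m)⁻¹} : ℕ) : ℝ)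
      ≤ ⌊2 ^ 7 * m * 2 ^ m * M⌋₊ := Nat.cast_le.2 (Nat.sInf_le floor_mem)
    _ ≤ 2 ^ 7 * m * 2 ^ m * M := Nat.floor_le (by positivity)

/-- There is a constant `C ≤ 2⁹` such that for all `m, k ∈ ℕ` and `d ≥ 2`, the inverse of
the minimal `k`-dispersion `N(2^{-m},d) = min{N : k-disp*(N,d) ≤ 2^{-m}}` satisfies
`N(2^{-m},d) ≤ C · m · 2^m · max{2^m · log(2^m d), k}`. -/
theorem statement_9 :
    ∃ C : ℝ, 0 < C ∧ C ≤ 2 ^ 9 ∧ ∀ m k d : ℕ, 1 ≤ m → 1 ≤ k → 2 ≤ d →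
      ((sInf { N : ℕ | kdispStar d k N ≤ ((2:ℝ) ^ m)⁻¹ } : ℕ) : ℝ)
        ≤ C * m * 2 ^ m * max ((2:ℝ) ^ m * Real.log ((2:ℝ) ^ m * d)) (k : ℝ) := by
  exact ⟨2 ^ 7, by norm_num, by norm_num, fun m k d hm _ hd =>
    statement_9_general k hm (one_le_two.trans hd)⟩
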